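/- For any n ∈ ℕ, m ∈ {0,…,n−1}, s > m, M ∈ ℕ, τ ≥ 1 and k > M^{1/(s−m)}, there exist constants c > 0 and 0 < p < 1 such that for every Borel measure μ on [0,1)ⁿ with dim_H(μ) ≥ s and for μ-almost every x: limsup_{l→∞} (1/l) · #{ j ∈ {1,…,l} : μ(Q_{𝚒, k^n − M k^m}) > c μ(τ Q_𝚒), where 𝚒 ∈ I_k^j is such that x ∈ Q_𝚒 } > p. -/

import Mathlib

open MeasureTheory Metric Filter Set
open scoped ENNReal Classical

/-- The `k`-adic cube of level `l` with address `z`. -/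
def kcube (n k l : ℕ) (z : Fin n → ℤ) : Set (EuclideanSpace ℝ (Fin n)) :=
  {x | ∀ i, (z i : ℝ) * (k : ℝ) ^ (-(l : ℤ)) ≤ x i ∧
    x i < ((z i : ℝ) + 1) * (k : ℝ) ^ (-(l : ℤ))}

/-- The cube `τQ` concentric with the level-`l` cube of address `z`, with side
length scaled by `τ`. -/
def scaledCube (n : ℕ) (τ : ℝ) (k l : ℕ) (z : Fin n → ℤ) :
    Set (EuclideanSpace ℝ (Fin n)) :=
  {x | ∀ i, |x i - ((z i : ℝ) + 1 / 2) * (k : ℝ) ^ (-(l : ℤ))| ≤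
    τ * (k : ℝ) ^ (-(l : ℤ)) / 2}

/-- The address of the level-`l` `k`-adic cube containing `x`. -/
noncomputable def kaddr (n k l : ℕ) (x : EuclideanSpace ℝ (Fin n)) : Fin n → ℤ :=
  fun i => ⌊x i * (k : ℝ) ^ (l : ℕ)⌋

/-- The (lower) Hausdorff dimension of a measure. -/
noncomputable def measDimH {n : ℕ} (μ : Measure (EuclideanSpace ℝ (Fin n))) : ℝ≥0∞ :=
  ⨅ (A : Set (EuclideanSpace ℝ (Fin n))) (_ : MeasurableSet A) (_ : 0 < μ A), dimH A

/-!
Call the step from level `j` to level `j + 1` light at `x` if the subcube containing `x` is not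
among the `P` heaviest ones, where `P = M * k ^ m < k ^ s`. In each unit cube, at most
`(P + u * k ^ n) ^ l * u ^ (-θ l)` cubes of level `l` are reached with at most `θ l` light steps
(weigh each cube by `u` to the number of its light steps). For small `u` and then small `θ` this is
at most `k ^ (d l)` with `d < s`, so the points with at most `θ l` light steps for infinitely many
`l` form a set of dimension less than `s`, which is `μ`-null.

On the other hand, the subcubes of level `j + 1` of mass at most `c * μ (τ Q)`, with `Q` of level
`j`, carry a small fraction of the mass of any compact set `K` once `j` is large: the dilates `τ Q`
overlap boundedly and those of the cubes that meet `K` lie close to `K`. Hence almost every `x`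
visits such a subcube on at most `(θ / 2) l` levels below `l`, for infinitely many `l`. For these
`l`, at least `(θ / 2) l` light steps lead to a subcube of mass greater than `c * μ (τ Q)`, and the
`(P + 1)`-th largest subcube is at least as heavy.
-/

open scoped Topology

section CountingMeasure

variable {α ι : Type*} [MeasurableSpace α]

lemma lintegral_card_filter_mem (μ : Measure α) (t : Finset ι) {S : ι → Set α}
    (hS : ∀ i, MeasurableSet (S i)) :
    ∫⁻ x, ((t.filter fun i => x ∈ S i).card : ℝ≥0∞) ∂μ = ∑ i ∈ t, μ (S i) := by
  calc ∫⁻ x, ((t.filter fun i => x ∈ S i).card : ℝ≥0∞) ∂μ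
      = ∫⁻ x, ∑ i ∈ t, (S i).indicator 1 x ∂μ := by
        simp only [indicator_apply, Pi.one_apply, Finset.sum_boole]
    _ = ∑ i ∈ t, μ (S i) := by
        rw [lintegral_finsetSum _ fun i _ => measurable_one.indicator (hS i)]
        simp only [lintegral_indicator_one (hS _)]

lemma measurable_card_filter_mem (t : Finset ι) {S : ι → Set α} (hS : ∀ i, MeasurableSet (S i)) :
    Measurable fun x => (t.filter fun i => x ∈ S i).card := by
  simp only [Finset.card_filter]
  exact Finset.measurable_sum _ fun i _ =>
    Measurable.ite (hS i) measurable_const measurable_const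

lemma tsum_measure_le_of_card_filter_le (μ : Measure α) {A : ι → Set α} {U : Set α} {N : ℕ}
    (hA : ∀ i, MeasurableSet (A i)) (hU : MeasurableSet U) (hAU : ∀ i, A i ⊆ U)
    (hN : ∀ x, ∀ t : Finset ι, (t.filter fun i => x ∈ A i).card ≤ N) :
    ∑' i, μ (A i) ≤ N * μ U := by
  rw [ENNReal.tsum_eq_iSup_sum]
  refine iSup_le fun t => ?_
  rw [← lintegral_card_filter_mem μ t hA, ← lintegral_indicator_const hU]
  refine lintegral_mono fun x => ?_
  by_cases hx : x ∈ U
  · rw [indicator_of_mem hx]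
    exact Nat.cast_le.2 (hN x t)
  · have hempty : (t.filter fun i => x ∈ A i) = ∅ :=
      Finset.filter_eq_empty_iff.2 fun i _ hi => hx (hAU i hi)
    simp only [hempty, Finset.card_empty, Nat.cast_zero, zero_le]

lemma mul_measureReal_le_sum_of_le_card_filter {μ : Measure α} {K : Set α} (hK : MeasurableSet K)
    (hKtop : μ K ≠ ∞) (t : Finset ι) {S : ι → Set α} (hS : ∀ i, MeasurableSet (S i)) {b : ℝ}
    (hb : ∀ x ∈ K, b ≤ (t.filter fun i => x ∈ S i).card) :
    b * μ.real K ≤ ∑ i ∈ t, μ.real (K ∩ S i) := by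
  have hle : ENNReal.ofReal b * μ K ≤ ∑ i ∈ t, μ (K ∩ S i) := by
    calc ENNReal.ofReal b * μ K = ∫⁻ _ in K, ENNReal.ofReal b ∂μ := (setLIntegral_const _ _).symm
      _ ≤ ∫⁻ x in K, ((t.filter fun i => x ∈ S i).card : ℝ≥0∞) ∂μ :=
          setLIntegral_mono' hK fun x hx => by
            simpa using ENNReal.ofReal_le_ofReal (hb x hx)
      _ = ∑ i ∈ t, μ (K ∩ S i) := by
          simp only [lintegral_card_filter_mem _ t hS, Measure.restrict_apply (hS _), inter_comm]
  have hfin : ∀ i ∈ t, μ (K ∩ S i) ≠ ∞ := fun i _ =>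
    measure_ne_top_of_subset inter_subset_left hKtop
  calc b * μ.real K ≤ (ENNReal.ofReal b * μ K).toReal := by
        rw [ENNReal.toReal_mul, ENNReal.toReal_ofReal']
        exact mul_le_mul_of_nonneg_right (le_max_left _ _) measureReal_nonneg
    _ ≤ (∑ i ∈ t, μ (K ∩ S i)).toReal := ENNReal.toReal_mono (ENNReal.sum_ne_top.2 hfin) hle
    _ = ∑ i ∈ t, μ.real (K ∩ S i) := ENNReal.toReal_sum hfin

lemma measureReal_eq_zero_of_eventually_lt_card_filter {μ : Measure α} {K : Set α}
    (hK : MeasurableSet K) (hKtop : μ K ≠ ∞) {S : ℕ → Set α} (hS : ∀ j, MeasurableSet (S j))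
    {a δ : ℝ} (haδ : a < δ) (ha : ∀ᶠ j in atTop, μ.real (K ∩ S j) ≤ a * μ.real K)
    (hδ : ∀ᶠ l : ℕ in atTop, ∀ x ∈ K, δ * l < ((Finset.range l).filter fun j => x ∈ S j).card) :
    μ.real K = 0 := by
  obtain ⟨j₀, hj₀⟩ := eventually_atTop.1 ha
  obtain ⟨L, hL⟩ := eventually_atTop.1 hδ
  have hgrowth : ∀ i : ℕ, L ≤ j₀ + i →
      δ * (j₀ + i) * μ.real K ≤ (j₀ + i * a) * μ.real K := by
    intro i hi
    calc δ * (j₀ + i) * μ.real K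
        ≤ ∑ j ∈ Finset.range (j₀ + i), μ.real (K ∩ S j) := by
          refine mul_measureReal_le_sum_of_le_card_filter hK hKtop _ hS fun x hx => ?_
          exact_mod_cast (hL _ hi x hx).le
      _ ≤ ∑ _j ∈ Finset.range j₀, μ.real K + ∑ _i ∈ Finset.range i, a * μ.real K := by
          rw [Finset.sum_range_add]
          exact add_le_add (Finset.sum_le_sum fun _ _ => measureReal_mono inter_subset_left hKtop)
            (Finset.sum_le_sum fun _ _ => hj₀ _ (Nat.le_add_right _ _))
      _ = (j₀ + i * a) * μ.real K := by
          simp only [Finset.sum_const, Finset.card_range, nsmul_eq_mul]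
          ring
  by_contra hK0
  have hKpos : 0 < μ.real K := measureReal_nonneg.lt_of_ne' hK0
  obtain ⟨i, hi⟩ := exists_nat_gt (max (L : ℝ) (j₀ * (1 - δ) / (δ - a)))
  have hLi : L ≤ j₀ + i :=
    (Nat.cast_lt.1 ((le_max_left _ _).trans_lt hi)).le.trans (Nat.le_add_left _ _)
  have hji : j₀ * (1 - δ) < i * (δ - a) :=
    (div_lt_iff₀ (sub_pos.2 haδ)).1 ((le_max_right _ _).trans_lt hi)
  linarith [le_of_mul_le_mul_right (hgrowth i hLi) hKpos]

end CountingMeasure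

lemma ae_frequently_card_filter_mem_le {X : Type*} [TopologicalSpace X] [T2Space X]
    [MeasurableSpace X] [OpensMeasurableSpace X] {μ : Measure X} [μ.InnerRegular]
    [IsFiniteMeasureOnCompacts μ] {S : ℕ → Set X} (hS : ∀ j, MeasurableSet (S j)) {a δ : ℝ}
    (haδ : a < δ)
    (ha : ∀ K, IsCompact K → μ K ≠ 0 → ∀ᶠ j in atTop, μ.real (K ∩ S j) ≤ a * μ.real K) :
    ∀ᵐ x ∂μ, ∃ᶠ l : ℕ in atTop, (((Finset.range l).filter fun j => x ∈ S j).card : ℝ) ≤ δ * l := by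
  let N : ℕ → Set X := fun L =>
    ⋂ l ≥ L, {x | δ * l < ((Finset.range l).filter fun j => x ∈ S j).card}
  have hNmeas : ∀ L, MeasurableSet (N L) := fun L =>
    MeasurableSet.iInter fun l => MeasurableSet.iInter fun _ =>
      measurableSet_lt measurable_const
        (measurable_from_top.comp (measurable_card_filter_mem (Finset.range l) hS))
  have hNnull : ∀ L, μ (N L) = 0 := by
    intro L
    by_contra hL
    obtain ⟨K, hKN, hK, hK0⟩ := (hNmeas L).exists_lt_isCompact (pos_iff_ne_zero.2 hL)
    refine (ENNReal.toReal_pos hK0.ne' hK.measure_ne_top).ne'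
      (measureReal_eq_zero_of_eventually_lt_card_filter hK.measurableSet hK.measure_ne_top hS haδ
        (ha K hK hK0.ne') ?_)
    filter_upwards [eventually_ge_atTop L] with l hl x hx
    exact mem_iInter₂.1 (hKN hx) l hl
  filter_upwards [ae_all_iff.2 fun L => measure_eq_zero_iff_ae_notMem.1 (hNnull L)] with x hx
  refine frequently_atTop.2 fun L => ?_
  simpa [N] using hx L

theorem hausdorffMeasure_limsup_cofinite_eq_zero {X ι : Type*} [EMetricSpace X]
    [MeasurableSpace X] [BorelSpace X] [Countable ι] {s : ι → Set X} {d : ℝ} (hd : 0 < d)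
    (hs : ∑' i, ediam (s i) ^ d ≠ ∞) : μH[d] (limsup s cofinite) = 0 := by
  have htail : Tendsto (fun t : Finset ι => ∑' i : {i // i ∉ t}, ediam (s i) ^ d) atTop (𝓝 0) :=
    ENNReal.tendsto_tsum_compl_atTop_zero hs
  have hradius : Tendsto (fun t : Finset ι => (∑' i : {i // i ∉ t}, ediam (s i) ^ d) ^ d⁻¹)
      atTop (𝓝 0) := by
    simpa [ENNReal.zero_rpow_of_pos (inv_pos.2 hd)] using htail.ennrpow_const d⁻¹
  refine le_antisymm ((Measure.hausdorffMeasure_le_liminf_tsum d _ _ hradius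
    (fun t (i : {i // i ∉ t}) => s i) ?_ ?_).trans htail.liminf_eq.le) zero_le
  · refine Eventually.of_forall fun t i => ?_
    rw [ENNReal.le_rpow_inv_iff hd]
    exact ENNReal.le_tsum (f := fun i : {i // i ∉ t} => ediam (s i) ^ d) i
  · refine Eventually.of_forall fun t x hx => ?_
    obtain ⟨i, hxi, hit⟩ := ((mem_limsup_iff_frequently_mem.1 hx).and_eventually
      t.finite_toSet.compl_mem_cofinite).exists
    exact mem_iUnion.2 ⟨⟨i, hit⟩, hxi⟩

lemma measure_eq_zero_of_dimH_lt_measDimH {n : ℕ} {μ : Measure (EuclideanSpace ℝ (Fin n))}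
    {A : Set (EuclideanSpace ℝ (Fin n))} (hA : MeasurableSet A) (h : dimH A < measDimH μ) :
    μ A = 0 := by
  by_contra h0
  exact h.not_ge (iInf₂_le_of_le A hA (iInf_le _ (pos_iff_ne_zero.2 h0)))

section Cubes

variable {n k : ℕ}

/-- The address of the `k`-adic cube of the previous level that contains a cube of address `z`. -/
def kparent (k : ℕ) (z : Fin n → ℤ) : Fin n → ℤ := fun i => z i / k

/-- The addresses of the `k ^ n` subcubes of the next level of a `k`-adic cube of address `z`. -/
noncomputable def kchildren (k : ℕ) (z : Fin n → ℤ) : Finset (Fin n → ℤ) :=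
  Fintype.piFinset fun i => Finset.Ico (k * z i) (k * z i + k)

/-- The addresses of the subcubes that lie `l` levels below a `k`-adic cube of address `z`. -/
noncomputable def kdescendants (k : ℕ) (z : Fin n → ℤ) : ℕ → Finset (Fin n → ℤ)
  | 0 => {z}
  | l + 1 => (kdescendants k z l).biUnion (kchildren k)

lemma card_kchildren (k : ℕ) (z : Fin n → ℤ) : (kchildren k z).card = k ^ n := by
  simp [kchildren]

lemma mem_kchildren_iff_kparent_eq (hk : 0 < k) {z z' : Fin n → ℤ} :
    z' ∈ kchildren k z ↔ kparent k z' = z := by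
  simp only [kchildren, kparent, Fintype.mem_piFinset, Finset.mem_Ico, funext_iff,
    Int.ediv_eq_iff_of_pos (Int.natCast_pos.2 hk), mul_comm (k : ℤ)]

lemma kparent_kaddr_succ (hk : 0 < k) (l : ℕ) (x : EuclideanSpace ℝ (Fin n)) :
    kparent k (kaddr n k (l + 1) x) = kaddr n k l x := by
  funext i
  simp only [kparent, kaddr, pow_succ, ← mul_assoc, Int.mul_natCast_floor_div_cancel hk.ne']

lemma kaddr_mem_kdescendants (hk : 0 < k) (l : ℕ) (x : EuclideanSpace ℝ (Fin n)) :
    kaddr n k l x ∈ kdescendants k (kaddr n k 0 x) l := by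
  induction l with
  | zero => exact Finset.mem_singleton_self (kaddr n k 0 x)
  | succ l ih =>
    rw [kdescendants, Finset.mem_biUnion]
    exact ⟨_, ih, (mem_kchildren_iff_kparent_eq hk).2 (kparent_kaddr_succ hk l x)⟩

lemma mem_kcube_iff_kaddr_eq (hk : 0 < k) {l : ℕ} {x : EuclideanSpace ℝ (Fin n)}
    {z : Fin n → ℤ} : x ∈ kcube n k l z ↔ kaddr n k l x = z := by
  have hkl : (0 : ℝ) < (k : ℝ) ^ l := by positivity
  simp only [kcube, kaddr, mem_ofPred_eq, funext_iff, Int.floor_eq_iff, zpow_neg, zpow_natCast,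
    ← div_eq_mul_inv, div_le_iff₀ hkl, lt_div_iff₀ hkl]

lemma measurable_kaddr (n k l : ℕ) : Measurable (kaddr n k l) := by
  unfold kaddr
  fun_prop

lemma measurableSet_scaledCube (n : ℕ) (τ : ℝ) (k l : ℕ) (z : Fin n → ℤ) :
    MeasurableSet (scaledCube n τ k l z) := by
  simp only [scaledCube, ofPred_forall]
  refine MeasurableSet.iInter fun i => measurableSet_le ?_ measurable_const
  fun_prop

lemma dist_le_sqrt_mul_of_forall_abs_sub_le {x y : EuclideanSpace ℝ (Fin n)} {r : ℝ} (hr : 0 ≤ r)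
    (h : ∀ i, |x i - y i| ≤ r) : dist x y ≤ √n * r := by
  rw [EuclideanSpace.dist_eq]
  refine Real.sqrt_le_iff.2 ⟨by positivity, ?_⟩
  calc ∑ i, dist (x i) (y i) ^ 2 ≤ ∑ _i : Fin n, r ^ 2 :=
        Finset.sum_le_sum fun i _ => pow_le_pow_left₀ dist_nonneg (h i) 2
    _ = (√n * r) ^ 2 := by simp [mul_pow]

lemma ediam_kcube_le (n k l : ℕ) (z : Fin n → ℤ) :
    ediam (kcube n k l z) ≤ ENNReal.ofReal (√n * ((k : ℝ) ^ l)⁻¹) := by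
  refine ediam_le fun x hx y hy => ?_
  rw [edist_dist]
  refine ENNReal.ofReal_le_ofReal ?_
  refine dist_le_sqrt_mul_of_forall_abs_sub_le (by positivity) fun i => ?_
  have hxi := hx i
  have hyi := hy i
  simp only [zpow_neg, zpow_natCast] at hxi hyi
  rw [abs_le]
  constructor <;> linarith [hxi.1, hxi.2, hyi.1, hyi.2]

lemma dist_le_of_mem_kcube_of_mem_scaledCube {τ : ℝ} {l : ℕ} {z : Fin n → ℤ}
    {x y : EuclideanSpace ℝ (Fin n)} (hx : x ∈ kcube n k l z) (hy : y ∈ scaledCube n τ k l z) :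
    dist y x ≤ √n * ((1 + |τ|) / 2 * ((k : ℝ) ^ l)⁻¹) := by
  refine dist_le_sqrt_mul_of_forall_abs_sub_le (by positivity) fun i => ?_
  have hxi := hx i
  have hyi := hy i
  have hτ : τ * ((k : ℝ) ^ l)⁻¹ ≤ |τ| * ((k : ℝ) ^ l)⁻¹ := by
    gcongr
    exact le_abs_self τ
  simp only [zpow_neg, zpow_natCast, abs_le] at hxi hyi
  rw [abs_le]
  constructor <;> linarith [hxi.1, hxi.2, hyi.1, hyi.2]

lemma card_Icc_ceil_floor_add_le (a τ : ℝ) :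
    (Finset.Icc ⌈a⌉ ⌊a + τ⌋).card ≤ ⌊τ⌋₊ + 1 := by
  have hfloor : ⌊a + τ⌋ ≤ ⌈a⌉ + ⌊τ⌋ := by
    rw [← Int.floor_intCast_add]
    exact Int.floor_mono (by linarith [Int.le_ceil a])
  rw [Int.card_Icc, ← Int.floor_toNat]
  omega

lemma card_filter_mem_scaledCube_le (hk : 0 < k) (τ : ℝ) (l : ℕ) (x : EuclideanSpace ℝ (Fin n))
    (t : Finset (Fin n → ℤ)) :
    (t.filter fun z => x ∈ scaledCube n τ k l z).card ≤ (⌊τ⌋₊ + 1) ^ n := by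
  have hkl : (0 : ℝ) < (k : ℝ) ^ l := by positivity
  let a : Fin n → ℝ := fun i => x i * (k : ℝ) ^ l - 1 / 2 - τ / 2
  have hsub : (t.filter fun z => x ∈ scaledCube n τ k l z) ⊆
      Fintype.piFinset fun i => Finset.Icc ⌈a i⌉ ⌊a i + τ⌋ := by
    intro z hz
    simp only [Fintype.mem_piFinset, Finset.mem_Icc, Int.ceil_le, Int.le_floor, a]
    intro i
    have hzi := (Finset.mem_filter.1 hz).2 i
    rw [zpow_neg, zpow_natCast, ← div_eq_mul_inv, ← div_eq_mul_inv, sub_div' hkl.ne', abs_div,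
      abs_of_pos hkl, div_right_comm, div_le_div_iff_of_pos_right hkl, abs_le] at hzi
    constructor <;> linarith [hzi.1, hzi.2]
  calc (t.filter fun z => x ∈ scaledCube n τ k l z).card
      ≤ ∏ i, (Finset.Icc ⌈a i⌉ ⌊a i + τ⌋).card :=
        (Finset.card_le_card hsub).trans_eq (Fintype.card_piFinset _)
    _ ≤ ∏ _i : Fin n, (⌊τ⌋₊ + 1) := Finset.prod_le_prod' fun i _ => card_Icc_ceil_floor_add_le _ _
    _ = (⌊τ⌋₊ + 1) ^ n := by simp

end Cubes

section ThinChildren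

variable {n k : ℕ}

/-- The set of points `x` whose cube of level `l + 1` carries at most the fraction `c` of the mass
of the `τ`-dilate of their cube of level `l`. -/
def thinChildSet (μ : Measure (EuclideanSpace ℝ (Fin n))) (k : ℕ) (τ : ℝ) (c : ℝ≥0∞) (l : ℕ) :
    Set (EuclideanSpace ℝ (Fin n)) :=
  {x | μ (kcube n k (l + 1) (kaddr n k (l + 1) x)) ≤ c * μ (scaledCube n τ k l (kaddr n k l x))}

lemma measurableSet_thinChildSet (μ : Measure (EuclideanSpace ℝ (Fin n))) (k : ℕ) (τ : ℝ)
    (c : ℝ≥0∞) (l : ℕ) : MeasurableSet (thinChildSet μ k τ c l) :=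
  measurableSet_le
    ((Measurable.of_discrete (f := fun z => μ (kcube n k (l + 1) z))).comp
      (measurable_kaddr n k (l + 1)))
    ((Measurable.of_discrete (f := fun z => c * μ (scaledCube n τ k l z))).comp
      (measurable_kaddr n k l))

lemma measure_kcube_inter_thinChildSet_le (μ : Measure (EuclideanSpace ℝ (Fin n))) (hk : 0 < k)
    (τ : ℝ) (c : ℝ≥0∞) (l : ℕ) (z : Fin n → ℤ) :
    μ (kcube n k l z ∩ thinChildSet μ k τ c l) ≤ k ^ n * (c * μ (scaledCube n τ k l z)) := by
  let T := (kchildren k z).filter fun z' => μ (kcube n k (l + 1) z') ≤ c * μ (scaledCube n τ k l z)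
  have hcover : kcube n k l z ∩ thinChildSet μ k τ c l ⊆ ⋃ z' ∈ T, kcube n k (l + 1) z' := by
    rintro x ⟨hxz, hx⟩
    have hz : kaddr n k l x = z := (mem_kcube_iff_kaddr_eq hk).1 hxz
    rw [thinChildSet, mem_ofPred_eq, hz] at hx
    refine mem_iUnion₂.2 ⟨_, Finset.mem_filter.2 ⟨?_, hx⟩, (mem_kcube_iff_kaddr_eq hk).2 rfl⟩
    rw [mem_kchildren_iff_kparent_eq hk, kparent_kaddr_succ hk, hz]
  calc μ (kcube n k l z ∩ thinChildSet μ k τ c l) ≤ ∑ z' ∈ T, μ (kcube n k (l + 1) z') :=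
        (measure_mono hcover).trans (measure_biUnion_finset_le _ _)
    _ ≤ T.card • (c * μ (scaledCube n τ k l z)) :=
        Finset.sum_le_card_nsmul _ _ _ fun z' hz' => (Finset.mem_filter.1 hz').2
    _ ≤ k ^ n * (c * μ (scaledCube n τ k l z)) := by
        rw [nsmul_eq_mul]
        gcongr
        exact_mod_cast (Finset.card_filter_le _ _).trans_eq (card_kchildren k z)

lemma tsum_measure_scaledCube_le (μ : Measure (EuclideanSpace ℝ (Fin n))) (hk : 0 < k) (τ : ℝ)
    (l : ℕ) (T : Set (Fin n → ℤ)) {U : Set (EuclideanSpace ℝ (Fin n))} (hU : MeasurableSet U)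
    (hTU : ∀ z ∈ T, scaledCube n τ k l z ⊆ U) :
    ∑' z : T, μ (scaledCube n τ k l z) ≤ ((⌊τ⌋₊ + 1) ^ n : ℕ) * μ U := by
  refine tsum_measure_le_of_card_filter_le μ (fun z => measurableSet_scaledCube n τ k l z) hU
    (fun z => hTU z z.2) fun x t => ?_
  calc (t.filter fun z : T => x ∈ scaledCube n τ k l z).card
      = ((t.map (Function.Embedding.subtype _)).filter fun z => x ∈ scaledCube n τ k l z).card := by
        rw [Finset.filter_map, Finset.card_map]
        rfl
    _ ≤ (⌊τ⌋₊ + 1) ^ n := card_filter_mem_scaledCube_le hk τ l x _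

lemma measure_inter_thinChildSet_le (μ : Measure (EuclideanSpace ℝ (Fin n))) (hk : 0 < k) (τ : ℝ)
    (c : ℝ≥0∞) (l : ℕ) (K : Set (EuclideanSpace ℝ (Fin n))) :
    μ (K ∩ thinChildSet μ k τ c l) ≤ k ^ n * c * (((⌊τ⌋₊ + 1) ^ n : ℕ) *
      μ (cthickening (√n * ((1 + |τ|) / 2 * ((k : ℝ) ^ l)⁻¹)) K)) := by
  let T : Set (Fin n → ℤ) := {z | (K ∩ kcube n k l z).Nonempty}
  have hTK : ∀ z ∈ T,
      scaledCube n τ k l z ⊆ cthickening (√n * ((1 + |τ|) / 2 * ((k : ℝ) ^ l)⁻¹)) K :=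
    fun z ⟨x, hxK, hxz⟩ y hy =>
      mem_cthickening_of_dist_le y x _ K hxK (dist_le_of_mem_kcube_of_mem_scaledCube hxz hy)
  have hcover : K ∩ thinChildSet μ k τ c l ⊆ ⋃ z : T, kcube n k l z ∩ thinChildSet μ k τ c l := by
    rintro x ⟨hxK, hx⟩
    have hxz : x ∈ kcube n k l (kaddr n k l x) := (mem_kcube_iff_kaddr_eq hk).2 rfl
    exact mem_iUnion.2 ⟨⟨kaddr n k l x, x, hxK, hxz⟩, hxz, hx⟩
  calc μ (K ∩ thinChildSet μ k τ c l)
      ≤ ∑' z : T, μ (kcube n k l z ∩ thinChildSet μ k τ c l) :=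
        (measure_mono hcover).trans (measure_iUnion_le _)
    _ ≤ ∑' z : T, k ^ n * (c * μ (scaledCube n τ k l z)) :=
        ENNReal.tsum_le_tsum fun z => measure_kcube_inter_thinChildSet_le μ hk τ c l z
    _ = k ^ n * c * ∑' z : T, μ (scaledCube n τ k l z) := by
        simp only [← mul_assoc, ENNReal.tsum_mul_left]
    _ ≤ _ := by
        gcongr
        exact tsum_measure_scaledCube_le μ hk τ l T isClosed_cthickening.measurableSet hTK

lemma eventually_measureReal_inter_thinChildSet_le (μ : Measure (EuclideanSpace ℝ (Fin n)))
    [IsLocallyFiniteMeasure μ] (hk : 1 < k) (τ : ℝ) {c : ℝ} (hc : 0 ≤ c)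
    {K : Set (EuclideanSpace ℝ (Fin n))} (hK : IsCompact K) (hK0 : μ K ≠ 0) :
    ∀ᶠ l in atTop, μ.real (K ∩ thinChildSet μ k τ (ENNReal.ofReal c) l) ≤
      k ^ n * c * ((⌊τ⌋₊ + 1) ^ n * 2) * μ.real K := by
  have hradius : Tendsto (fun l : ℕ => √n * ((1 + |τ|) / 2 * ((k : ℝ) ^ l)⁻¹)) atTop (𝓝 0) := by
    have hpow : Tendsto (fun l : ℕ => ((k : ℝ) ^ l)⁻¹) atTop (𝓝 0) :=
      (tendsto_pow_atTop_atTop_of_one_lt (Nat.one_lt_cast.2 hk)).inv_tendsto_atTop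
    simpa using (hpow.const_mul ((1 + |τ|) / 2)).const_mul √n
  have hthick : ∀ᶠ r in 𝓝 (0 : ℝ), μ (cthickening r K) < 2 * μ K := by
    refine (tendsto_measure_cthickening_of_isCompact hK).eventually_lt_const ?_
    rw [two_mul]
    exact ENNReal.lt_add_right hK.measure_ne_top hK0
  filter_upwards [hradius.eventually hthick] with l hl
  have hle : μ (K ∩ thinChildSet μ k τ (ENNReal.ofReal c) l) ≤
      k ^ n * ENNReal.ofReal c * (((⌊τ⌋₊ + 1) ^ n : ℕ) * (2 * μ K)) :=
    (measure_inter_thinChildSet_le μ (by omega) τ _ l K).trans (by gcongr)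
  refine (ENNReal.toReal_mono ?_ hle).trans_eq ?_
  · have := hK.measure_ne_top (μ := μ)
    finiteness
  · simp only [ENNReal.toReal_mul, ENNReal.toReal_pow, ENNReal.toReal_natCast,
      ENNReal.toReal_ofReal hc, ENNReal.toReal_ofNat, measureReal_def]
    push_cast
    ring

theorem exists_forall_ae_frequently_card_thinChildSet_le (n : ℕ) (hk : 1 < k) (τ : ℝ) {δ : ℝ}
    (hδ : 0 < δ) :
    ∃ c : ℝ, 0 < c ∧ ∀ (μ : Measure (EuclideanSpace ℝ (Fin n))) [IsLocallyFiniteMeasure μ],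
      ∀ᵐ x ∂μ, ∃ᶠ l : ℕ in atTop,
        (((Finset.range l).filter fun j => x ∈ thinChildSet μ k τ (ENNReal.ofReal c) j).card : ℝ) ≤
          δ * l := by
  let D : ℝ := k ^ n * ((⌊τ⌋₊ + 1) ^ n * 2)
  have hD : 0 < D := by positivity
  refine ⟨δ / 2 / D, by positivity, fun μ _ => ?_⟩
  refine ae_frequently_card_filter_mem_le (measurableSet_thinChildSet μ k τ _) (half_lt_self hδ)
    fun K hK hK0 => ?_
  filter_upwards [eventually_measureReal_inter_thinChildSet_le μ hk τ (c := δ / 2 / D)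
    (by positivity) hK hK0] with l hl
  rwa [show (k : ℝ) ^ n * (δ / 2 / D) * ((⌊τ⌋₊ + 1) ^ n * 2) = D * (δ / 2 / D) by ring,
    mul_div_cancel₀ _ hD.ne'] at hl

end ThinChildren

section LightSteps

variable {n k : ℕ}

/-- The number of levels `1 ≤ j ≤ l` at which the ancestor of level `j` of a cube of level `l` and
address `z` is not among the heavy cubes; `B j` is the set of addresses of the heavy cubes of level
`j + 1`. -/
noncomputable def lightCount (k : ℕ) (B : ℕ → Set (Fin n → ℤ)) : ℕ → (Fin n → ℤ) → ℕ
  | 0, _ => 0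
  | l + 1, z => lightCount k B l (kparent k z) + if z ∈ B l then 0 else 1

lemma lightCount_kaddr (hk : 0 < k) (B : ℕ → Set (Fin n → ℤ)) (l : ℕ)
    (x : EuclideanSpace ℝ (Fin n)) :
    lightCount k B l (kaddr n k l x) =
      ((Finset.range l).filter fun j => kaddr n k (j + 1) x ∉ B j).card := by
  induction l with
  | zero => rfl
  | succ l ih =>
    rw [lightCount, kparent_kaddr_succ hk, ih, Finset.card_filter, Finset.card_filter,
      Finset.sum_range_succ, ite_not]

lemma sum_kchildren_pow_lightCount_le (hk : 0 < k) {B : ℕ → Set (Fin n → ℤ)} {P l : ℕ}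
    {z : Fin n → ℤ} (hB : ((kchildren k z).filter fun z' => z' ∈ B l).card ≤ P) {u : ℝ}
    (hu : 0 ≤ u) :
    ∑ z' ∈ kchildren k z, u ^ lightCount k B (l + 1) z' ≤
      u ^ lightCount k B l z * (P + u * k ^ n) := by
  calc ∑ z' ∈ kchildren k z, u ^ lightCount k B (l + 1) z'
      = ∑ z' ∈ kchildren k z, u ^ lightCount k B l z * (if z' ∈ B l then 1 else u) := by
        refine Finset.sum_congr rfl fun z' hz' => ?_
        rw [lightCount, (mem_kchildren_iff_kparent_eq hk).1 hz', pow_add]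
        split_ifs <;> simp
    _ ≤ ∑ z' ∈ kchildren k z, u ^ lightCount k B l z * ((if z' ∈ B l then 1 else 0) + u) := by
        gcongr
        split_ifs <;> linarith
    _ = u ^ lightCount k B l z *
        (((kchildren k z).filter fun z' => z' ∈ B l).card + u * k ^ n) := by
        rw [← Finset.mul_sum, Finset.sum_add_distrib, Finset.sum_boole, Finset.sum_const,
          card_kchildren, nsmul_eq_mul, Nat.cast_pow, mul_comm u]
    _ ≤ u ^ lightCount k B l z * (P + u * k ^ n) := by gcongr

lemma sum_kdescendants_pow_lightCount_le (hk : 0 < k) {B : ℕ → Set (Fin n → ℤ)} {P : ℕ}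
    (hB : ∀ l z, ((kchildren k z).filter fun z' => z' ∈ B l).card ≤ P) {u : ℝ} (hu : 0 ≤ u)
    (z : Fin n → ℤ) (l : ℕ) :
    ∑ z' ∈ kdescendants k z l, u ^ lightCount k B l z' ≤ (P + u * k ^ n) ^ l := by
  induction l with
  | zero => simp [kdescendants, lightCount]
  | succ l ih =>
    have hdisj : (kdescendants k z l : Set (Fin n → ℤ)).PairwiseDisjoint (kchildren k) := by
      refine fun y _ y' _ hyy' => Finset.disjoint_left.2 fun w hw hw' => hyy' ?_
      rw [← (mem_kchildren_iff_kparent_eq hk).1 hw, (mem_kchildren_iff_kparent_eq hk).1 hw']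
    calc ∑ z' ∈ kdescendants k z (l + 1), u ^ lightCount k B (l + 1) z'
        = ∑ y ∈ kdescendants k z l, ∑ z' ∈ kchildren k y, u ^ lightCount k B (l + 1) z' :=
          Finset.sum_biUnion hdisj
      _ ≤ ∑ y ∈ kdescendants k z l, u ^ lightCount k B l y * (P + u * k ^ n) :=
          Finset.sum_le_sum fun y _ => sum_kchildren_pow_lightCount_le hk (hB l y) hu
      _ ≤ (P + u * k ^ n) ^ l * (P + u * k ^ n) := by
          rw [← Finset.sum_mul]
          gcongr
      _ = (P + u * k ^ n) ^ (l + 1) := (pow_succ _ _).symm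

lemma card_filter_lightCount_le (hk : 0 < k) {B : ℕ → Set (Fin n → ℤ)} {P : ℕ}
    (hB : ∀ l z, ((kchildren k z).filter fun z' => z' ∈ B l).card ≤ P) {u : ℝ} (hu : 0 < u)
    (hu1 : u ≤ 1) (θ : ℝ) (z : Fin n → ℤ) (l : ℕ) :
    (((kdescendants k z l).filter fun z' => (lightCount k B l z' : ℝ) ≤ θ * l).card : ℝ) ≤
      ((P + u * k ^ n) * u ^ (-θ)) ^ l := by
  let G := (kdescendants k z l).filter fun z' => (lightCount k B l z' : ℝ) ≤ θ * l
  have hG : G.card * u ^ (θ * l) ≤ (P + u * (k : ℝ) ^ n) ^ l := by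
    calc G.card * u ^ (θ * l) ≤ ∑ z' ∈ G, u ^ lightCount k B l z' := by
          rw [← nsmul_eq_mul]
          refine Finset.card_nsmul_le_sum _ _ _ fun z' hz' => ?_
          rw [← Real.rpow_natCast]
          exact Real.rpow_le_rpow_of_exponent_ge hu hu1 (Finset.mem_filter.1 hz').2
      _ ≤ ∑ z' ∈ kdescendants k z l, u ^ lightCount k B l z' :=
          Finset.sum_le_sum_of_subset_of_nonneg (Finset.filter_subset _ _) fun _ _ _ => by
            positivity
      _ ≤ (P + u * (k : ℝ) ^ n) ^ l := sum_kdescendants_pow_lightCount_le hk hB hu.le z l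
  rwa [mul_pow, ← Real.rpow_mul_natCast hu.le, neg_mul, Real.rpow_neg hu.le, ← div_eq_mul_inv,
    le_div_iff₀ (by positivity)]

lemma sum_ediam_kcube_rpow_le (hk : 0 < k) {d : ℝ} (hd : 0 ≤ d) (l : ℕ)
    (G : Finset (Fin n → ℤ)) {Λ : ℝ} (hG : (G.card : ℝ) ≤ Λ ^ l) :
    ∑ z ∈ G, ediam (kcube n k l z) ^ d ≤ ENNReal.ofReal (√n ^ d * (Λ / k ^ d) ^ l) := by
  have hside : (√n * ((k : ℝ) ^ l)⁻¹) ^ d = √n ^ d * (((k : ℝ) ^ d) ^ l)⁻¹ := by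
    rw [Real.mul_rpow (by positivity) (by positivity), Real.inv_rpow (by positivity),
      ← Real.rpow_natCast_mul (by positivity), ← Real.rpow_mul_natCast (by positivity), mul_comm d]
  calc ∑ z ∈ G, ediam (kcube n k l z) ^ d
      ≤ G.card • ENNReal.ofReal ((√n * ((k : ℝ) ^ l)⁻¹) ^ d) := by
        refine Finset.sum_le_card_nsmul _ _ _ fun z _ => ?_
        rw [← ENNReal.ofReal_rpow_of_nonneg (by positivity) hd]
        exact ENNReal.rpow_le_rpow (ediam_kcube_le n k l z) hd
    _ = ENNReal.ofReal (G.card * (√n ^ d * (((k : ℝ) ^ d) ^ l)⁻¹)) := by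
        rw [hside, ← ENNReal.ofReal_nsmul, nsmul_eq_mul]
    _ ≤ ENNReal.ofReal (Λ ^ l * (√n ^ d * (((k : ℝ) ^ d) ^ l)⁻¹)) := by gcongr
    _ = ENNReal.ofReal (√n ^ d * (Λ / k ^ d) ^ l) := by
        rw [div_pow, div_eq_mul_inv, mul_left_comm]

lemma hausdorffMeasure_setOf_frequently_kaddr_mem_eq_zero (hk : 0 < k) {d : ℝ} (hd : 0 < d)
    {Λ : ℝ} (hΛ : Λ < k ^ d) {G : ℕ → Finset (Fin n → ℤ)}
    (hG : ∀ l, ((G l).card : ℝ) ≤ Λ ^ l) :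
    μH[d] {x | ∃ᶠ l in atTop, kaddr n k l x ∈ G l} = 0 := by
  have hΛ0 : 0 ≤ Λ := by simpa using (Nat.cast_nonneg _).trans (hG 1)
  have hratio : Λ / (k : ℝ) ^ d < 1 := (div_lt_one (by positivity)).2 hΛ
  let Q : (Σ l, G l) → Set (EuclideanSpace ℝ (Fin n)) := fun q => kcube n k q.1 q.2
  have hsum : ∑' q, ediam (Q q) ^ d ≠ ∞ := by
    refine ne_top_of_le_ne_top (b := ∑' l : ℕ, ENNReal.ofReal (√n ^ d * (Λ / k ^ d) ^ l)) ?_ ?_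
    · exact ((summable_geometric_of_lt_one (by positivity) hratio).mul_left _).tsum_ofReal_ne_top
    · rw [ENNReal.tsum_sigma']
      refine ENNReal.tsum_le_tsum fun l => ?_
      rw [tsum_fintype, Finset.sum_coe_sort (G l) fun z => ediam (kcube n k l z) ^ d]
      exact sum_ediam_kcube_rpow_le hk hd.le l (G l) (hG l)
  refine measure_mono_null (fun x hx => ?_) (hausdorffMeasure_limsup_cofinite_eq_zero hd hsum)
  rw [mem_limsup_iff_frequently_mem, frequently_cofinite_iff_infinite]
  refine Infinite.of_image Sigma.fst ((Nat.frequently_atTop_iff_infinite.1 hx).mono fun l hl => ?_)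
  exact ⟨⟨l, _, hl⟩, (mem_kcube_iff_kaddr_eq hk).2 rfl, rfl⟩

lemma dimH_setOf_frequently_lightCount_le (hk : 0 < k) {B : ℕ → Set (Fin n → ℤ)} {P : ℕ}
    (hB : ∀ l z, ((kchildren k z).filter fun z' => z' ∈ B l).card ≤ P) {d u θ : ℝ} (hd : 0 < d)
    (hu : 0 < u) (hu1 : u ≤ 1) (hθ : (P + u * k ^ n) * u ^ (-θ) < (k : ℝ) ^ d) :
    dimH {x | ∃ᶠ l : ℕ in atTop, (lightCount k B l (kaddr n k l x) : ℝ) ≤ θ * l} ≤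
      ENNReal.ofReal d := by
  let G (z : Fin n → ℤ) (l : ℕ) : Finset (Fin n → ℤ) :=
    (kdescendants k z l).filter fun z' => (lightCount k B l z' : ℝ) ≤ θ * l
  have hcover : {x | ∃ᶠ l : ℕ in atTop, (lightCount k B l (kaddr n k l x) : ℝ) ≤ θ * l} ⊆
      ⋃ z, {x | ∃ᶠ l in atTop, kaddr n k l x ∈ G z l} := fun x hx =>
    mem_iUnion.2 ⟨kaddr n k 0 x, hx.mono fun l hl =>
      Finset.mem_filter.2 ⟨kaddr_mem_kdescendants hk l x, hl⟩⟩
  have hnull : μH[d.toNNReal]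
      {x | ∃ᶠ l : ℕ in atTop, (lightCount k B l (kaddr n k l x) : ℝ) ≤ θ * l} = 0 := by
    rw [Real.coe_toNNReal d hd.le]
    exact measure_mono_null hcover (measure_iUnion_null fun z =>
      hausdorffMeasure_setOf_frequently_kaddr_mem_eq_zero hk hd hθ
        (card_filter_lightCount_le hk hB hu hu1 θ z))
  exact dimH_le_of_hausdorffMeasure_ne_top (hnull ▸ ENNReal.zero_ne_top)

lemma exists_lightCount_parameters (n : ℕ) (hk : 0 < k) {P s : ℝ} (hs : 0 < s)
    (hP : P < (k : ℝ) ^ s) :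
    ∃ d u θ : ℝ, (0 < d ∧ d < s) ∧ (0 < u ∧ u < 1) ∧ (0 < θ ∧ θ < 1) ∧
      (P + u * k ^ n) * u ^ (-θ) < (k : ℝ) ^ d := by
  have hk0 : (k : ℝ) ≠ 0 := Nat.cast_ne_zero.2 hk.ne'
  have hd : ∀ᶠ d in 𝓝[<] s, P < (k : ℝ) ^ d :=
    ((Real.continuous_const_rpow hk0).tendsto s).mono_left nhdsWithin_le_nhds
      |>.eventually_const_lt hP
  obtain ⟨d, hPd, hds⟩ := (hd.and (Ioo_mem_nhdsLT hs)).exists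
  have hu : ∀ᶠ u in 𝓝[>] (0 : ℝ), P + u * k ^ n < (k : ℝ) ^ d :=
    (Continuous.tendsto (f := fun u : ℝ => P + u * k ^ n) (by fun_prop) 0).mono_left
      nhdsWithin_le_nhds |>.eventually_lt_const (by simpa using hPd)
  obtain ⟨u, hPu, hu01⟩ := (hu.and (Ioo_mem_nhdsGT one_pos)).exists
  have hθ : ∀ᶠ θ in 𝓝[>] (0 : ℝ), (P + u * k ^ n) * u ^ (-θ) < (k : ℝ) ^ d :=
    (((Real.continuous_const_rpow hu01.1.ne').comp continuous_neg).const_mul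
      (P + u * (k : ℝ) ^ n)).tendsto 0 |>.mono_left nhdsWithin_le_nhds
      |>.eventually_lt_const (by simpa using hPu)
  obtain ⟨θ, hPθ, hθ01⟩ := (hθ.and (Ioo_mem_nhdsGT one_pos)).exists
  exact ⟨d, u, θ, hds, hu01, hθ01, hPθ⟩

theorem exists_forall_ae_eventually_lt_lightCount (n : ℕ) (hk : 0 < k) {P : ℕ} {s : ℝ}
    (hs : 0 < s) (hP : (P : ℝ) < (k : ℝ) ^ s) :
    ∃ θ : ℝ, 0 < θ ∧ θ < 1 ∧ ∀ μ : Measure (EuclideanSpace ℝ (Fin n)),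
      ENNReal.ofReal s ≤ measDimH μ → ∀ B : ℕ → Set (Fin n → ℤ),
      (∀ l z, ((kchildren k z).filter fun z' => z' ∈ B l).card ≤ P) →
      ∀ᵐ x ∂μ, ∀ᶠ l : ℕ in atTop, θ * l < lightCount k B l (kaddr n k l x) := by
  obtain ⟨d, u, θ, ⟨hd, hds⟩, ⟨hu, hu1⟩, ⟨hθ, hθ1⟩, hlt⟩ := exists_lightCount_parameters n hk hs hP
  refine ⟨θ, hθ, hθ1, fun μ hμ B hB => ?_⟩
  let F : Set (EuclideanSpace ℝ (Fin n)) :=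
    {x | ∃ᶠ l : ℕ in atTop, (lightCount k B l (kaddr n k l x) : ℝ) ≤ θ * l}
  have hFmeas : MeasurableSet F := by
    have hF : F = limsup (fun l : ℕ =>
        {x | (lightCount k B l (kaddr n k l x) : ℝ) ≤ θ * l}) atTop := by
      ext x
      simp only [F, mem_limsup_iff_frequently_mem, mem_ofPred_eq]
    rw [hF]
    exact MeasurableSet.measurableSet_limsup fun l => measurable_kaddr n k l
      (MeasurableSet.of_discrete (s := {z | (lightCount k B l z : ℝ) ≤ θ * l}))
  have hFdim : dimH F < measDimH μ :=
    (dimH_setOf_frequently_lightCount_le hk hB hd hu hu1.le hlt).trans_lt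
      (((ENNReal.ofReal_lt_ofReal_iff hs).2 hds).trans_le hμ)
  have hFnull : μ F = 0 := measure_eq_zero_of_dimH_lt_measDimH hFmeas hFdim
  filter_upwards [measure_eq_zero_iff_ae_notMem.1 hFnull] with x hx
  simpa [F] using hx

end LightSteps

section RichLevels

variable {n k : ℕ}

lemma card_filter_lt_le_of_monotoneOn {α β : Type*} [LinearOrder β] {t : Finset α} {N : ℕ} (P : ℕ)
    {e : ℕ → α} {f : α → β} (hcard : t.card ≤ N) (hinj : InjOn e (Iio N))
    (hmaps : MapsTo e (Iio N) t) (hmono : MonotoneOn (f ∘ e) (Iio N)) :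
    (t.filter fun z => f (e (N - P - 1)) < f z).card ≤ P := by
  have himage : (Finset.range N).image e = t := by
    refine Finset.eq_of_subset_of_card_le (Finset.image_subset_iff.2 fun a ha =>
      hmaps (Finset.mem_range.1 ha)) ?_
    rwa [Finset.card_image_of_injOn (by simpa using hinj), Finset.card_range]
  have hsub : (t.filter fun z => f (e (N - P - 1)) < f z) ⊆ (Finset.Ico (N - P) N).image e := by
    intro z hz
    obtain ⟨hzt, hlt⟩ := Finset.mem_filter.1 hz
    obtain ⟨a, ha, rfl⟩ := Finset.mem_image.1 (himage ▸ hzt)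
    have haN : a < N := Finset.mem_range.1 ha
    refine Finset.mem_image_of_mem e (Finset.mem_Ico.2 ⟨?_, haN⟩)
    by_contra! haP
    exact hlt.not_ge (hmono haN (show N - P - 1 < N by omega) (by omega))
  calc (t.filter fun z => f (e (N - P - 1)) < f z).card ≤ (Finset.Ico (N - P) N).card :=
        (Finset.card_le_card hsub).trans Finset.card_image_le
    _ ≤ P := by
        rw [Nat.card_Ico]
        omega

lemma lt_limsup_natCast_div_of_frequently_le {p q : ℝ} (hpq : p < q) {g : ℕ → ℕ}
    (hg : ∀ l, g l ≤ l) (h : ∃ᶠ l : ℕ in atTop, q * l ≤ g l + 1) :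
    p < limsup (fun l : ℕ => (g l : ℝ) / l) atTop := by
  obtain ⟨r, hpr, hrq⟩ := exists_between hpq
  have hbdd : IsBoundedUnder (· ≤ ·) atTop fun l : ℕ => (g l : ℝ) / l :=
    isBoundedUnder_of ⟨1, fun l => div_le_one_of_le₀ (Nat.cast_le.2 (hg l)) l.cast_nonneg⟩
  have hlarge : ∀ᶠ l : ℕ in atTop, 1 ≤ (q - r) * l :=
    (tendsto_natCast_atTop_atTop.const_mul_atTop (sub_pos.2 hrq)).eventually_ge_atTop 1
  have hr : ∃ᶠ l : ℕ in atTop, r ≤ g l / l := by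
    refine (h.and_eventually (hlarge.and (eventually_gt_atTop 0))).mono ?_
    rintro l ⟨hl, hlr, hl0⟩
    rw [le_div_iff₀ (Nat.cast_pos.2 hl0)]
    linarith
  exact hpr.trans_le (le_limsup_of_frequently_le hr hbdd)

/-- The addresses of the `k`-adic cubes of level `l + 1` whose mass exceeds the threshold `v l z`
attached to the address `z` of the cube of level `l` that contains them. -/
def heavyChildSet (μ : Measure (EuclideanSpace ℝ (Fin n))) (k : ℕ) (v : ℕ → (Fin n → ℤ) → ℝ≥0∞)
    (l : ℕ) : Set (Fin n → ℤ) :=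
  {z | v l (kparent k z) < μ (kcube n k (l + 1) z)}

lemma lightCount_kaddr_le_card_add_card_add_one (hk : 0 < k)
    (μ : Measure (EuclideanSpace ℝ (Fin n))) (τ : ℝ) (c : ℝ≥0∞) (v : ℕ → (Fin n → ℤ) → ℝ≥0∞)
    (l : ℕ) (x : EuclideanSpace ℝ (Fin n)) :
    lightCount k (heavyChildSet μ k v) l (kaddr n k l x) ≤
      ((Finset.Icc 1 l).filter fun j =>
        c * μ (scaledCube n τ k j (kaddr n k j x)) < v j (kaddr n k j x)).card +
      ((Finset.range l).filter fun j => x ∈ thinChildSet μ k τ c j).card + 1 := by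
  rw [lightCount_kaddr hk]
  refine (Finset.card_le_card (t := insert 0 (_ ∪ _)) fun j hj => ?_).trans
    ((Finset.card_insert_le _ _).trans (Nat.succ_le_succ (Finset.card_union_le _ _)))
  obtain ⟨hjl, hlight⟩ := Finset.mem_filter.1 hj
  rw [heavyChildSet, mem_ofPred_eq, not_lt, kparent_kaddr_succ hk] at hlight
  rw [Finset.mem_insert, Finset.mem_union, Finset.mem_filter, Finset.mem_filter]
  rcases Nat.eq_zero_or_pos j with hj0 | hj0
  · exact Or.inl hj0
  by_cases hthin : x ∈ thinChildSet μ k τ c j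
  · exact Or.inr (Or.inr ⟨hjl, hthin⟩)
  · exact Or.inr (Or.inl ⟨Finset.mem_Icc.2 ⟨hj0, (Finset.mem_range.1 hjl).le⟩,
      (not_le.1 hthin).trans_le hlight⟩)

theorem exists_forall_ae_lt_limsup_card_filter_lt (n : ℕ) (hk : 1 < k) {P : ℕ} {s : ℝ}
    (hs : 0 < s) (hP : (P : ℝ) < (k : ℝ) ^ s) (τ : ℝ) :
    ∃ c : ℝ, 0 < c ∧ ∃ p : ℝ, 0 < p ∧ p < 1 ∧
      ∀ (μ : Measure (EuclideanSpace ℝ (Fin n))) [IsLocallyFiniteMeasure μ],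
        ENNReal.ofReal s ≤ measDimH μ → ∀ v : ℕ → (Fin n → ℤ) → ℝ≥0∞,
        (∀ l z, ((kchildren k z).filter fun z' => v l z < μ (kcube n k (l + 1) z')).card ≤ P) →
        ∀ᵐ x ∂μ, p < limsup (fun l : ℕ => (((Finset.Icc 1 l).filter fun j =>
          ENNReal.ofReal c * μ (scaledCube n τ k j (kaddr n k j x)) <
            v j (kaddr n k j x)).card : ℝ) / l) atTop := by
  have hk0 : 0 < k := by omega
  obtain ⟨θ, hθ0, hθ1, hlight⟩ := exists_forall_ae_eventually_lt_lightCount n hk0 hs hP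
  obtain ⟨c, hc, hthin⟩ :=
    exists_forall_ae_frequently_card_thinChildSet_le n hk τ (half_pos hθ0)
  refine ⟨c, hc, θ / 4, by linarith, by linarith, fun μ _ hμ v hv => ?_⟩
  have hheavy : ∀ l z,
      ((kchildren k z).filter fun z' => z' ∈ heavyChildSet μ k v l).card ≤ P := by
    intro l z
    refine (Finset.card_le_card fun z' hz' => ?_).trans (hv l z)
    obtain ⟨hz'z, hlt⟩ := Finset.mem_filter.1 hz'
    rw [heavyChildSet, mem_ofPred_eq, (mem_kchildren_iff_kparent_eq hk0).1 hz'z] at hlt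
    exact Finset.mem_filter.2 ⟨hz'z, hlt⟩
  filter_upwards [hlight μ hμ _ hheavy, hthin μ] with x hxlight hxthin
  refine lt_limsup_natCast_div_of_frequently_le (q := θ / 2) (by linarith)
    (fun l => (Finset.card_filter_le _ _).trans_eq (Nat.card_Icc 1 l)) ?_
  refine (hxthin.and_eventually hxlight).mono ?_
  rintro l ⟨hlthin, hllight⟩
  have hcount := Nat.cast_le (α := ℝ).2
    (lightCount_kaddr_le_card_add_card_add_one hk0 μ τ (ENNReal.ofReal c) v l x)
  push_cast at hcount
  linarith

lemma natCast_mul_pow_lt_rpow {M m : ℕ} {s : ℝ} (hs : m < s)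
    (hk : (M : ℝ) ^ (1 / (s - m)) < k) : ((M * k ^ m : ℕ) : ℝ) < (k : ℝ) ^ s := by
  have hk0 : (0 : ℝ) < k := (Real.rpow_nonneg M.cast_nonneg _).trans_lt hk
  have hM : (M : ℝ) < (k : ℝ) ^ (s - m) := by
    rwa [one_div, Real.rpow_inv_lt_iff_of_pos M.cast_nonneg hk0.le (sub_pos.2 hs)] at hk
  rwa [Real.rpow_sub hk0, Real.rpow_natCast, lt_div_iff₀ (by positivity), ← Nat.cast_pow,
    ← Nat.cast_mul] at hM

lemma one_lt_of_rpow_lt {M m : ℕ} (hM : 1 ≤ M) {s : ℝ} (hs : m < s)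
    (hk : (M : ℝ) ^ (1 / (s - m)) < k) : 1 < k := by
  have hone : (1 : ℝ) ≤ (M : ℝ) ^ (1 / (s - m)) :=
    Real.one_le_rpow (Nat.one_le_cast.2 hM) (one_div_nonneg.2 (sub_pos.2 hs).le)
  exact_mod_cast hone.trans_lt hk

end RichLevels

theorem stmt14_general (n : ℕ) {k P : ℕ} {s : ℝ} (hk : 1 < k) (hs : 0 < s)
    (hP : (P : ℝ) < (k : ℝ) ^ s) (τ : ℝ) :
    ∃ c : ℝ, 0 < c ∧ ∃ p : ℝ, 0 < p ∧ p < 1 ∧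
      ∀ (μ : Measure (EuclideanSpace ℝ (Fin n))) [IsLocallyFiniteMeasure μ],
        ENNReal.ofReal s ≤ measDimH μ →
        ∀ (e : ℕ → (Fin n → ℤ) → ℕ → (Fin n → ℤ)),
          (∀ l z, ∀ a < k ^ n, ∀ b < k ^ n, e l z a = e l z b → a = b) →
          (∀ l z, ∀ a < k ^ n, ∀ j : Fin n,
            (k : ℤ) * z j ≤ e l z a j ∧ e l z a j < (k : ℤ) * z j + k) →
          (∀ l z, ∀ a b, a ≤ b → b < k ^ n →
            μ (kcube n k (l + 1) (e l z a)) ≤ μ (kcube n k (l + 1) (e l z b))) →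
          ∀ᵐ x ∂μ, p <
            limsup (fun l : ℕ =>
              (((Finset.Icc 1 l).filter (fun j : ℕ =>
                ENNReal.ofReal c * μ (scaledCube n τ k j (kaddr n k j x)) <
                  μ (kcube n k (j + 1) (e j (kaddr n k j x) (k ^ n - P - 1))))).card : ℝ) /
                (l : ℝ))
              atTop := by
  obtain ⟨c, hc, p, hp0, hp1, h⟩ := exists_forall_ae_lt_limsup_card_filter_lt n hk hs hP τ
  refine ⟨c, hc, p, hp0, hp1, fun μ _ hμ e hinj hmem hmono => ?_⟩
  refine h μ hμ (fun l z => μ (kcube n k (l + 1) (e l z (k ^ n - P - 1)))) fun l z => ?_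
  exact card_filter_lt_le_of_monotoneOn P (f := fun z' => μ (kcube n k (l + 1) z'))
    (card_kchildren k z).le (fun a ha b hb => hinj l z a ha b hb)
    (fun a ha => Fintype.mem_piFinset.2 fun j => Finset.mem_Ico.2 (hmem l z a ha j))
    (fun a _ b hb hab => hmono l z a b hab hb)

theorem stmt14 (n m : ℕ) (hm : m < n) (s : ℝ) (hs : (m : ℝ) < s) (M : ℕ) (hM : 1 ≤ M)
    (τ : ℝ) (hτ : 1 ≤ τ) (k : ℕ) (hk : (M : ℝ) ^ (1 / (s - m)) < (k : ℝ)) :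
    ∃ c : ℝ, 0 < c ∧ ∃ p : ℝ, 0 < p ∧ p < 1 ∧
      ∀ (μ : Measure (EuclideanSpace ℝ (Fin n))) [IsFiniteMeasure μ],
        μ {x | ∀ j : Fin n, 0 ≤ x j ∧ x j < 1}ᶜ = 0 →
        ENNReal.ofReal s ≤ measDimH μ →
        ∀ (e : ℕ → (Fin n → ℤ) → ℕ → (Fin n → ℤ)),
          -- `e l z` lists the `kⁿ` children addresses of the cube `(l, z)` without repetition:
          (∀ l z, ∀ a < k ^ n, ∀ b < k ^ n, e l z a = e l z b → a = b) →
          (∀ l z, ∀ a < k ^ n, ∀ j : Fin n,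
            (k : ℤ) * z j ≤ e l z a j ∧ e l z a j < (k : ℤ) * z j + k) →
          -- the enumeration is in increasing order of measure:
          (∀ l z, ∀ a b, a ≤ b → b < k ^ n →
            μ (kcube n k (l + 1) (e l z a)) ≤ μ (kcube n k (l + 1) (e l z b))) →
          ∀ᵐ x ∂μ, p <
            limsup (fun l : ℕ =>
              (((Finset.Icc 1 l).filter (fun j : ℕ =>
                ENNReal.ofReal c * μ (scaledCube n τ k j (kaddr n k j x)) <
                  μ (kcube n k (j + 1)
                    (e j (kaddr n k j x) (k ^ n - M * k ^ m - 1))))).card : ℝ) / (l : ℝ))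
              atTop := by
  obtain ⟨c, hc, p, hp0, hp1, h⟩ := stmt14_general n (one_lt_of_rpow_lt hM hs hk)
    ((Nat.cast_nonneg m).trans_lt hs) (natCast_mul_pow_lt_rpow hs hk) τ
  exact ⟨c, hc, p, hp0, hp1, fun μ _ _ => h μ⟩
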